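/- arXiv:2403.06150 — 3 statements merged into one kernel-verified Lean document; each statement's English description precedes it below -/
import Mathlib

section
/- In the Bertrand pricing game with incomplete information with n ≥ 2 firms, in every Bayesian Nash equilibrium every firm's expected profit equals 0. -/
open Classical

/-- The set of winning firms at signal profile `s` and WTP `ω`, under strategy profile `p`:
those firms quoting the minimal price, provided that price is at most the buyer's WTP. -/
noncomputable def winners {ι : Type*} [Fintype ι] [Nonempty ι] {S : ι → Type*}
    (p : ∀ i, S i → ℝ) (s : ∀ i, S i) (ω : ℝ) : Finset ι :=
  Finset.univ.filter fun j =>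
    p j (s j) = Finset.univ.inf' Finset.univ_nonempty (fun k => p k (s k)) ∧ p j (s j) ≤ ω

/-- Realized profit of firm `i`: its price divided by the number of winners if it wins,
and `0` otherwise. -/
noncomputable def realizedProfit {ι : Type*} [Fintype ι] [Nonempty ι] {S : ι → Type*}
    (p : ∀ i, S i → ℝ) (s : ∀ i, S i) (ω : ℝ) (i : ι) : ℝ :=
  if i ∈ winners p s ω then p i (s i) / (winners p s ω).card else 0

/-- Expected profit of firm `i` under the joint distribution `μ` on signal profiles and WTPs. -/
noncomputable def expProfit {ι : Type*} [Fintype ι] [Nonempty ι] [DecidableEq ι]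
    {S : ι → Type*} [∀ i, Fintype (S i)] (μ : (∀ i, S i) → ℝ → ℝ) (Ω : Finset ℝ)
    (p : ∀ i, S i → ℝ) (i : ι) : ℝ :=
  ∑ s : ∀ i, S i, ∑ ω ∈ Ω, μ s ω * realizedProfit p s ω i

/-- Bayesian Nash equilibrium: no firm can strictly increase its expected profit by a
unilateral change of its own strategy. -/
def isBNE {ι : Type*} [Fintype ι] [Nonempty ι] [DecidableEq ι] {S : ι → Type*}
    [∀ i, Fintype (S i)] (μ : (∀ i, S i) → ℝ → ℝ) (Ω : Finset ℝ)
    (p : ∀ i, S i → ℝ) : Prop :=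
  ∀ i : ι, ∀ q : S i → ℝ, expProfit μ Ω (Function.update p i q) i ≤ expProfit μ Ω p i

section helpers
variable {ι : Type*} [Fintype ι] [Nonempty ι] {S : ι → Type*}

lemma mem_winners_iff (p : ∀ i, S i → ℝ) (s : ∀ i, S i) (ω : ℝ) (i : ι) :
    i ∈ winners p s ω ↔ (∀ k, p i (s i) ≤ p k (s k)) ∧ p i (s i) ≤ ω := by
  unfold winners
  simp only [Finset.mem_filter, Finset.mem_univ, true_and]
  refine and_congr_left fun _ => ⟨fun h k => ?_, fun h => le_antisymm ?_ ?_⟩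
  · rw [h]; exact Finset.inf'_le (fun k => p k (s k)) (Finset.mem_univ k)
  · exact Finset.le_inf' _ _ fun k _ => h k
  · exact Finset.inf'_le (fun k => p k (s k)) (Finset.mem_univ i)

lemma realizedProfit_nonneg (p : ∀ i, S i → ℝ) (s : ∀ i, S i) (ω : ℝ) (i : ι)
    (h : 0 ≤ p i (s i)) : 0 ≤ realizedProfit p s ω i := by
  unfold realizedProfit
  split_ifs
  · positivity
  · exact le_rfl

lemma realizedProfit_nonpos (p : ∀ i, S i → ℝ) (s : ∀ i, S i) (ω : ℝ) (i : ι)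
    (h : p i (s i) ≤ 0) : realizedProfit p s ω i ≤ 0 := by
  unfold realizedProfit
  split_ifs
  · exact div_nonpos_of_nonpos_of_nonneg h (by positivity)
  · exact le_rfl

lemma realizedProfit_le (p : ∀ i, S i → ℝ) (s : ∀ i, S i) (ω : ℝ) (i : ι)
    (h : 0 ≤ p i (s i)) : realizedProfit p s ω i ≤ p i (s i) := by
  unfold realizedProfit
  split_ifs with hw
  · apply div_le_self h
    exact_mod_cast Finset.card_pos.2 ⟨i, hw⟩
  · exact h

lemma realizedProfit_le_half (p : ∀ i, S i → ℝ) (s : ∀ i, S i) (ω : ℝ) (i j : ι)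
    (hij : i ≠ j) (hi : i ∈ winners p s ω) (h : 0 ≤ p i (s i)) :
    realizedProfit p s ω j ≤ p i (s i) / 2 := by
  unfold realizedProfit
  split_ifs with hw
  · have e : p j (s j) = p i (s i) :=
      le_antisymm (((mem_winners_iff p s ω j).1 hw).1 i) (((mem_winners_iff p s ω i).1 hi).1 j)
    rw [e]
    have h1 : 1 < (winners p s ω).card := Finset.one_lt_card.2 ⟨i, hi, j, hw, hij⟩
    have h2 : (2 : ℝ) ≤ ((winners p s ω).card : ℝ) := by exact_mod_cast h1
    exact div_le_div_of_nonneg_left h (by norm_num) h2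
  · positivity

lemma realizedProfit_congr (p p' : ∀ i, S i → ℝ) (s : ∀ i, S i) (ω : ℝ) (i : ι)
    (h : ∀ k, p k (s k) = p' k (s k)) : realizedProfit p s ω i = realizedProfit p' s ω i := by
  have hw : winners p s ω = winners p' s ω := by
    ext k; rw [mem_winners_iff, mem_winners_iff]; simp only [h]
  unfold realizedProfit
  rw [hw, h]

lemma realizedProfit_undercut (p : ∀ i, S i → ℝ) (s : ∀ i, S i) (ω : ℝ) (j : ι)
    (h : ∀ k, k ≠ j → p j (s j) < p k (s k)) (hω : p j (s j) ≤ ω) :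
    realizedProfit p s ω j = p j (s j) := by
  have hw : winners p s ω = {j} := by
    ext k
    rw [mem_winners_iff, Finset.mem_singleton]
    constructor
    · intro hk
      by_contra hne
      exact absurd (hk.1 j) (not_le.2 (h k hne))
    · rintro rfl
      refine ⟨fun l => ?_, hω⟩
      by_cases hl : l = k
      · rw [hl]
      · exact (h l hl).le
  unfold realizedProfit
  rw [hw]; simp

end helpers

/-- In a BNE there is no positive-probability sale at a positive price. -/
lemma no_positive_sale
    {ι : Type*} [Fintype ι] [Nonempty ι] [DecidableEq ι] (hn : 2 ≤ Fintype.card ι)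
    {S : ι → Type*} [∀ i, Fintype (S i)]
    (Ω : Finset ℝ)
    (μ : (∀ i, S i) → ℝ → ℝ)
    (hμ0 : ∀ s ω, 0 ≤ μ s ω)
    (hμ1 : ∑ s : ∀ i, S i, ∑ ω ∈ Ω, μ s ω = 1)
    (p : ∀ i, S i → ℝ) (hp : isBNE μ Ω p) (s₀ : ∀ i, S i) (ω₀ : ℝ) (hω₀ : ω₀ ∈ Ω) (i₀ : ι)
    (h1 : 0 < μ s₀ ω₀) (h2 : i₀ ∈ winners p s₀ ω₀) (h3 : 0 < p i₀ (s₀ i₀)) : False := by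
  let A : Finset ((∀ i, S i) × ℝ × ι) :=
    ((Finset.univ : Finset (∀ i, S i)) ×ˢ (Ω ×ˢ (Finset.univ : Finset ι))).filter
      fun x => 0 < μ x.1 x.2.1 ∧ x.2.2 ∈ winners p x.1 x.2.1 ∧ 0 < p x.2.2 (x.1 x.2.2)
  have hA : A.Nonempty := ⟨(s₀, ω₀, i₀), by simp [A, *]⟩
  obtain ⟨⟨s, ω, i⟩, hm, hmax⟩ := A.exists_max_image (fun x => p x.2.2 (x.1 x.2.2)) hA
  simp only [A, Finset.mem_filter, Finset.mem_product, Finset.mem_univ, true_and, and_true] at hm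
  obtain ⟨hωΩ, hm, hi, hP⟩ := hm
  have hmax' : ∀ s' : ∀ i, S i, ∀ ω' ∈ Ω, ∀ j, 0 < μ s' ω' → j ∈ winners p s' ω' →
      0 < p j (s' j) → p j (s' j) ≤ p i (s i) := by
    intro s' ω' hω' j a b c
    exact hmax (s', ω', j) (by simp [A, *])
  clear hmax
  obtain ⟨j, hji⟩ : ∃ j, j ≠ i := by
    have : Nontrivial ι := Fintype.one_lt_card_iff_nontrivial.1 hn
    exact exists_ne i
  have hPw := (mem_winners_iff p s ω i).1 hi
  set P := p i (s i) with hPdef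
  set m := μ s ω with hmdef
  have hm1 : m ≤ 1 := by
    rw [← hμ1]
    calc m ≤ ∑ ω' ∈ Ω, μ s ω' :=
          Finset.single_le_sum (f := fun ω' => μ s ω') (fun _ _ => hμ0 _ _) hωΩ
      _ ≤ _ := Finset.single_le_sum (f := fun s' => ∑ ω' ∈ Ω, μ s' ω')
          (fun _ _ => Finset.sum_nonneg fun _ _ => hμ0 _ _) (Finset.mem_univ s)
  set ε := m * P / 4 with hε
  have hεpos : 0 < ε := by positivity
  have hεP : ε < P := by nlinarith
  let q : S j → ℝ := Function.update (p j) (s j) (P - ε)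
  let p' := Function.update p j q
  have hp'k : ∀ (s' : ∀ i, S i) k, k ≠ j → p' k (s' k) = p k (s' k) := by
    intro s' k hk; simp [p', hk]
  have hp'j : ∀ s' : ∀ i, S i, s' j = s j → p' j (s' j) = P - ε := by
    intro s' h; simp [p', q, h]
  have hp'n : ∀ s' : ∀ i, S i, s' j ≠ s j → p' j (s' j) = p j (s' j) := by
    intro s' h; simp [p', q, h]
  have hdev : expProfit μ Ω p' j ≤ expProfit μ Ω p j := hp j q
  -- pointwise bound
  have key : ∀ s' : ∀ i, S i, ∀ ω' ∈ Ω,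
      μ s' ω' * realizedProfit p s' ω' j - μ s' ω' * ε
        + (if s' = s then (if ω' = ω then m * P / 2 else 0) else 0)
        ≤ μ s' ω' * realizedProfit p' s' ω' j := by
    intro s' ω' hω'
    by_cases he : s' = s ∧ ω' = ω
    · obtain ⟨rfl, rfl⟩ := he
      have e := hp'j s' rfl
      have u : realizedProfit p' s' ω' j = P - ε := by
        rw [realizedProfit_undercut p' s' ω' j, e]
        · intro k hk
          rw [e, hp'k s' k hk]
          linarith [hPw.1 k]
        · rw [e]; linarith [hPw.2]
      have o := realizedProfit_le_half p s' ω' i j hji.symm hi hP.le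
      rw [u, if_pos rfl, if_pos rfl]
      have := mul_le_mul_of_nonneg_left o hm.le
      rw [← hmdef]
      rw [← hPdef] at this
      linarith
    · have hz : (if s' = s then (if ω' = ω then m * P / 2 else 0) else 0) = 0 := by
        split_ifs <;> simp_all
      rw [hz, add_zero, ← mul_sub]
      rcases (hμ0 s' ω').eq_or_lt with h0 | h0
      · simp [← h0]
      apply mul_le_mul_of_nonneg_left _ h0.le
      by_cases hs : s' j = s j
      · have e := hp'j s' hs
        by_cases hw : j ∈ winners p s' ω'
        · have hge : P ≤ p j (s' j) := by rw [hs]; exact hPw.1 j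
          have hle := hmax' s' ω' hω' j h0 hw (by linarith)
          have hwj := (mem_winners_iff p s' ω' j).1 hw
          have u : realizedProfit p' s' ω' j = P - ε := by
            rw [realizedProfit_undercut p' s' ω' j, e]
            · intro k hk
              rw [e, hp'k s' k hk]
              linarith [hwj.1 k]
            · rw [e]; linarith [hwj.2]
          have := realizedProfit_le p s' ω' j (by linarith)
          linarith
        · have := realizedProfit_nonneg p' s' ω' j (by rw [e]; linarith)
          have h0' : realizedProfit p s' ω' j = 0 := by
            unfold realizedProfit; rw [if_neg hw]
          linarith
      · have : realizedProfit p' s' ω' j = realizedProfit p s' ω' j := by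
          apply realizedProfit_congr
          intro k
          by_cases hk : k = j
          · subst hk; exact hp'n s' hs
          · exact hp'k s' k hk
        linarith
  have tot := Finset.sum_le_sum fun s' (_ : s' ∈ (Finset.univ : Finset (∀ i, S i))) =>
    Finset.sum_le_sum (key s')
  have hsum1 : ∑ s' : ∀ i, S i, ∑ ω' ∈ Ω, μ s' ω' * ε = ε := by
    simp only [← Finset.sum_mul]; rw [hμ1, one_mul]
  have hsum2 : ∑ s' : ∀ i, S i, ∑ ω' ∈ Ω,
      (if s' = s then (if ω' = ω then m * P / 2 else 0) else 0) = m * P / 2 := by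
    rw [Finset.sum_eq_single s]
    · simp [hωΩ]
    · intro b _ hb; simp [hb]
    · simp
  simp only [Finset.sum_add_distrib, Finset.sum_sub_distrib] at tot
  rw [hsum1, hsum2] at tot
  unfold expProfit at hdev
  linarith

/-- In a BNE, expected profit is nonnegative. -/
lemma no_negative_sale
    {ι : Type*} [Fintype ι] [Nonempty ι] [DecidableEq ι]
    {S : ι → Type*} [∀ i, Fintype (S i)]
    (Ω : Finset ℝ)
    (μ : (∀ i, S i) → ℝ → ℝ)
    (hμ0 : ∀ s ω, 0 ≤ μ s ω)
    (p : ∀ i, S i → ℝ) (hp : isBNE μ Ω p) (i : ι) : 0 ≤ expProfit μ Ω p i := by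
  refine le_trans ?_ (hp i (fun _ => 0))
  unfold expProfit
  refine Finset.sum_nonneg fun s _ => Finset.sum_nonneg fun ω _ => mul_nonneg (hμ0 _ _) ?_
  apply realizedProfit_nonneg
  simp

/-- with `n ≥ 2` firms, in every Bayesian Nash equilibrium every firm's
expected profit equals `0`. -/
theorem BNE_expProfit_eq_zero
    {ι : Type*} [Fintype ι] [Nonempty ι] [DecidableEq ι] (hn : 2 ≤ Fintype.card ι)
    {S : ι → Type*} [∀ i, Fintype (S i)]
    (Ω : Finset ℝ) (hΩpos : ∀ ω ∈ Ω, 0 < ω)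
    (μ : (∀ i, S i) → ℝ → ℝ)
    (hμ0 : ∀ s ω, 0 ≤ μ s ω)
    (hμ1 : ∑ s : ∀ i, S i, ∑ ω ∈ Ω, μ s ω = 1)
    (p : ∀ i, S i → ℝ) (hp : isBNE μ Ω p) :
    ∀ i : ι, expProfit μ Ω p i = 0 := by
  intro i
  refine le_antisymm ?_ (no_negative_sale Ω μ hμ0 p hp i)
  unfold expProfit
  refine Finset.sum_nonpos fun s _ => Finset.sum_nonpos fun ω hω => ?_
  rcases (hμ0 s ω).eq_or_lt with h0 | h0
  · simp [← h0]
  refine mul_nonpos_of_nonneg_of_nonpos h0.le ?_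
  by_cases hw : i ∈ winners p s ω
  · apply realizedProfit_nonpos
    by_contra hpos
    exact no_positive_sale hn Ω μ hμ0 hμ1 p hp s ω hω i h0 hw (not_le.1 hpos)
  · unfold realizedProfit; rw [if_neg hw]
end

section
/- In the Bertrand pricing game with incomplete information with exactly two firms, a strategy profile p is a Bayesian Nash equilibrium if and only if each firm i quotes p_i(s_i) = 0 at every signal s_i that has strictly positive marginal probability under μ. -/
open Classical

/-- Realized profit of a firm quoting `a` when its (unique) rival quotes `b` and the buyer's
WTP is `ω`: it earns `a` if it strictly undercuts the rival and `a ≤ ω`, half of `a` on a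
tie with `a ≤ ω`, and `0` otherwise.  This is the two-firm specialization of the winner set
`W(s,ω)` of the Bertrand pricing game with incomplete information. -/
noncomputable def pay (a b ω : ℝ) : ℝ :=
  if a < b ∧ a ≤ ω then a else if a = b ∧ a ≤ ω then a / 2 else 0

/-- Expected profit of firm 1 under the joint distribution `μ` on signal pairs and WTPs. -/
noncomputable def expProfit1 {S₁ S₂ : Type*} [Fintype S₁] [Fintype S₂]
    (μ : S₁ → S₂ → ℝ → ℝ) (Ω : Finset ℝ) (p₁ : S₁ → ℝ) (p₂ : S₂ → ℝ) : ℝ :=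
  ∑ s₁ : S₁, ∑ s₂ : S₂, ∑ ω ∈ Ω, μ s₁ s₂ ω * pay (p₁ s₁) (p₂ s₂) ω

/-- Expected profit of firm 2 under the joint distribution `μ` on signal pairs and WTPs. -/
noncomputable def expProfit2 {S₁ S₂ : Type*} [Fintype S₁] [Fintype S₂]
    (μ : S₁ → S₂ → ℝ → ℝ) (Ω : Finset ℝ) (p₁ : S₁ → ℝ) (p₂ : S₂ → ℝ) : ℝ :=
  ∑ s₁ : S₁, ∑ s₂ : S₂, ∑ ω ∈ Ω, μ s₁ s₂ ω * pay (p₂ s₂) (p₁ s₁) ω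

/-- Bayesian Nash equilibrium of the two-firm Bertrand pricing game with incomplete
information: no firm can strictly increase its expected profit by a unilateral deviation. -/
def isBNE2 {S₁ S₂ : Type*} [Fintype S₁] [Fintype S₂]
    (μ : S₁ → S₂ → ℝ → ℝ) (Ω : Finset ℝ) (p₁ : S₁ → ℝ) (p₂ : S₂ → ℝ) : Prop :=
  (∀ q₁ : S₁ → ℝ, expProfit1 μ Ω q₁ p₂ ≤ expProfit1 μ Ω p₁ p₂) ∧
  (∀ q₂ : S₂ → ℝ, expProfit2 μ Ω p₁ q₂ ≤ expProfit2 μ Ω p₁ p₂)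

/-- Interim expected profit of quoting `a` at a given signal, where `w` is the conditional weight. -/
noncomputable def interim {T : Type*} [Fintype T] (w : T → ℝ → ℝ) (Ω : Finset ℝ)
    (p : T → ℝ) (a : ℝ) : ℝ :=
  ∑ t : T, ∑ ω ∈ Ω, w t ω * pay a (p t) ω

lemma pay_nonpos {a b ω : ℝ} (h : a ≤ 0) : pay a b ω ≤ 0 := by
  unfold pay; split_ifs <;> linarith

lemma pay_nonneg {a b ω : ℝ} (h : 0 ≤ a) : 0 ≤ pay a b ω := by
  unfold pay; split_ifs <;> linarith

lemma pay_zero {b ω : ℝ} : pay 0 b ω = 0 := by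
  unfold pay; split_ifs <;> simp

lemma pay_rival_zero {a ω : ℝ} : pay a 0 ω ≤ 0 := by
  unfold pay
  split_ifs with h1 h2
  · exact h1.1.le
  · linarith [h2.1]
  · exact le_rfl

lemma pay_neg {a b ω : ℝ} (h : a < 0) (hb : a ≤ b) (hω : 0 < ω) : pay a b ω < 0 := by
  unfold pay
  have : a ≤ ω := by linarith
  rcases hb.lt_or_eq with h1 | h1
  · simp [h1, this, h]
  · subst h1; simp [this]; linarith

lemma pay_undercut {M b ω : ℝ} (h : 0 < M) (hb : b ≤ M) :
    3 / 2 * pay M b ω ≤ pay (3 / 4 * M) b ω := by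
  by_cases hc : M = b ∧ M ≤ ω
  · obtain ⟨rfl, h2⟩ := hc
    have h3 : 3 / 4 * M < M := by linarith
    have h4 : 3 / 4 * M ≤ ω := by linarith
    unfold pay
    rw [if_neg (by simp), if_pos ⟨rfl, h2⟩, if_pos ⟨h3, h4⟩]
    linarith
  · have : pay M b ω = 0 := by
      unfold pay
      rw [if_neg (by intro h; linarith [h.1]), if_neg hc]
    rw [this]
    simpa using pay_nonneg (by linarith : (0 : ℝ) ≤ 3 / 4 * M)

lemma dsum_pos {T : Type*} [Fintype T] {Ω : Finset ℝ} {f : T → ℝ → ℝ}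
    (h : ∀ t, ∀ ω ∈ Ω, 0 ≤ f t ω) {t : T} {ω : ℝ} (hω : ω ∈ Ω) (hp : 0 < f t ω) :
    0 < ∑ t : T, ∑ ω ∈ Ω, f t ω :=
  Finset.sum_pos' (fun t _ => Finset.sum_nonneg (h t))
    ⟨t, Finset.mem_univ _, Finset.sum_pos' (h t) ⟨ω, hω, hp⟩⟩

lemma exists_atom {T : Type*} [Fintype T] {Ω : Finset ℝ} {f : T → ℝ → ℝ}
    (hp : 0 < ∑ t : T, ∑ ω ∈ Ω, f t ω) : ∃ t, ∃ ω ∈ Ω, 0 < f t ω := by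
  by_contra! hc
  exact absurd hp (not_lt.2 (Finset.sum_nonpos fun t _ => Finset.sum_nonpos (hc t)))

lemma interim_nonpos {T : Type*} [Fintype T] {w : T → ℝ → ℝ} {Ω : Finset ℝ} {p : T → ℝ} {a : ℝ}
    (hw : ∀ t ω, 0 ≤ w t ω) (ha : a ≤ 0) : interim w Ω p a ≤ 0 :=
  Finset.sum_nonpos fun t _ => Finset.sum_nonpos fun ω _ =>
    mul_nonpos_of_nonneg_of_nonpos (hw t ω) (pay_nonpos ha)

/-- An optimal price is not a negative price that wins with positive probability. -/
lemma opt_not_neg {T : Type*} [Fintype T] {w : T → ℝ → ℝ} {Ω : Finset ℝ} {p : T → ℝ} {x : ℝ}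
    (hΩ : ∀ ω ∈ Ω, 0 < ω) (hw : ∀ t ω, 0 ≤ w t ω)
    (hopt : ∀ a, interim w Ω p a ≤ interim w Ω p x)
    {t : T} {ω : ℝ} (hω : ω ∈ Ω) (hp : 0 < w t ω) (hx : x < 0) : p t < x := by
  by_contra! hc
  have h0 : interim w Ω p 0 = 0 := by simp [interim, pay_zero]
  have h1 : 0 < ∑ t : T, ∑ ω ∈ Ω, -(w t ω * pay x (p t) ω) := by
    refine dsum_pos (fun t ω _ => ?_) (t := t) hω ?_
    · have := mul_nonpos_of_nonneg_of_nonpos (hw t ω) (pay_nonpos (b := p t) (ω := ω) hx.le)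
      linarith
    · have := mul_neg_of_pos_of_neg hp (pay_neg hx hc (hΩ ω hω))
      linarith
  simp only [Finset.sum_neg_distrib] at h1
  have h2 := hopt 0
  rw [h0] at h2
  unfold interim at h2
  linarith

/-- If some rival price is positive on an atom, the optimal interim profit is positive. -/
lemma opt_pos {T : Type*} [Fintype T] {w : T → ℝ → ℝ} {Ω : Finset ℝ} {p : T → ℝ} {x : ℝ}
    (hΩ : ∀ ω ∈ Ω, 0 < ω) (hw : ∀ t ω, 0 ≤ w t ω)
    (hopt : ∀ a, interim w Ω p a ≤ interim w Ω p x)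
    {t : T} {ω : ℝ} (hω : ω ∈ Ω) (hp : 0 < w t ω) (hx : 0 < p t) : 0 < interim w Ω p x := by
  refine lt_of_lt_of_le ?_ (hopt (min (p t) ω / 2))
  have hm : 0 < min (p t) ω := lt_min hx (hΩ ω hω)
  have h1 := min_le_left (p t) ω
  have h2 := min_le_right (p t) ω
  refine dsum_pos (fun t' ω' _ => mul_nonneg (hw t' ω') (pay_nonneg (by linarith))) (t := t) hω ?_
  refine mul_pos hp ?_
  unfold pay
  rw [if_pos ⟨by linarith, by linarith⟩]
  linarith

lemma opt_max {T : Type*} [Fintype T] {w : T → ℝ → ℝ} {Ω : Finset ℝ} {p : T → ℝ} {x : ℝ}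
    (hw : ∀ t ω, 0 ≤ w t ω)
    (hopt : ∀ a, interim w Ω p a ≤ interim w Ω p x) (hx : 0 < x)
    (hmax : ∀ t, ∀ ω ∈ Ω, 0 < w t ω → p t ≤ x) (hpos : 0 < interim w Ω p x) : False := by
  have h : 3 / 2 * interim w Ω p x ≤ interim w Ω p (3 / 4 * x) := by
    unfold interim
    simp only [Finset.mul_sum]
    refine Finset.sum_le_sum fun t _ => Finset.sum_le_sum fun ω hω => ?_
    rcases (hw t ω).eq_or_lt with h0 | h0
    · simp [← h0]
    · have := mul_le_mul_of_nonneg_left (pay_undercut (ω := ω) hx (hmax t ω hω h0)) h0.le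
      linarith
  linarith [hopt (3 / 4 * x)]

lemma opt_of_dev {S T : Type*} [Fintype S] [Fintype T] {μ : S → T → ℝ → ℝ} {Ω : Finset ℝ}
    {p : S → ℝ} {r : T → ℝ}
    (h : ∀ q : S → ℝ, expProfit1 μ Ω q r ≤ expProfit1 μ Ω p r) (s : S) (a : ℝ) :
    interim (μ s) Ω r a ≤ interim (μ s) Ω r (p s) := by
  by_contra! hc
  refine absurd (h (Function.update p s a)) (not_le.2 ?_)
  refine Finset.sum_lt_sum (fun i _ => ?_) ⟨s, Finset.mem_univ _, ?_⟩
  · by_cases hi : i = s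
    · subst hi; simpa [interim] using hc.le
    · simp [Function.update_of_ne hi]
  · simpa [interim] using hc

lemma dev_of_zero {S T : Type*} [Fintype S] [Fintype T] {μ : S → T → ℝ → ℝ} {Ω : Finset ℝ}
    {p : S → ℝ} {r : T → ℝ} (h0 : ∀ s t ω, 0 ≤ μ s t ω)
    (hp : ∀ s t, ∀ ω ∈ Ω, 0 < μ s t ω → p s = 0)
    (hr : ∀ s t, ∀ ω ∈ Ω, 0 < μ s t ω → r t = 0) (q : S → ℝ) :
    expProfit1 μ Ω q r ≤ expProfit1 μ Ω p r := by
  refine Finset.sum_le_sum fun s _ => Finset.sum_le_sum fun t _ => Finset.sum_le_sum fun ω hω => ?_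
  rcases (h0 s t ω).eq_or_lt with h | h
  · simp [← h]
  · rw [hp s t ω hω h, hr s t ω hω h, pay_zero]
    exact mul_le_mul_of_nonneg_left pay_rival_zero h.le

lemma expProfit2_eq {S T : Type*} [Fintype S] [Fintype T] (μ : S → T → ℝ → ℝ) (Ω : Finset ℝ)
    (p : S → ℝ) (r : T → ℝ) :
    expProfit2 μ Ω p r = expProfit1 (fun t s => μ s t) Ω r p :=
  Finset.sum_comm

/-- No atom can carry the maximal price if that price is positive. -/
lemma no_max {S T : Type*} [Fintype S] [Fintype T] {μ : S → T → ℝ → ℝ} {Ω : Finset ℝ}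
    {p : S → ℝ} {r : T → ℝ} (hΩ : ∀ ω ∈ Ω, 0 < ω) (h0 : ∀ s t ω, 0 ≤ μ s t ω)
    (o1 : ∀ s a, interim (μ s) Ω r a ≤ interim (μ s) Ω r (p s))
    (o2 : ∀ t a, interim (fun s => μ s t) Ω p a ≤ interim (fun s => μ s t) Ω p (r t))
    {s : S} {t : T} {ω : ℝ} (hω : ω ∈ Ω) (hp : 0 < μ s t ω) (hx : 0 < p s)
    (hmax : ∀ t', ∀ ω' ∈ Ω, 0 < μ s t' ω' → r t' ≤ p s) : False := by
  have h2 := opt_pos hΩ (fun s ω => h0 s t ω) (o2 t) hω hp hx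
  have hr : 0 < r t := by
    by_contra! hc
    exact absurd h2 (not_lt.2 (interim_nonpos (fun s ω => h0 s t ω) hc))
  exact opt_max (h0 s) (o1 s) hx hmax (opt_pos hΩ (h0 s) (o1 s) hω hp hr)

/-- with exactly two firms, a strategy profile is a Bayesian Nash equilibrium
iff each firm quotes `0` at every signal having strictly positive marginal probability. -/
theorem two_firm_BNE_iff_zero_on_positive_marginals
    {S₁ S₂ : Type*} [Fintype S₁] [Fintype S₂]
    (Ω : Finset ℝ) (hΩpos : ∀ ω ∈ Ω, 0 < ω)
    (μ : S₁ → S₂ → ℝ → ℝ)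
    (hμ0 : ∀ s₁ s₂ ω, 0 ≤ μ s₁ s₂ ω)
    (hμ1 : ∑ s₁ : S₁, ∑ s₂ : S₂, ∑ ω ∈ Ω, μ s₁ s₂ ω = 1)
    (p₁ : S₁ → ℝ) (p₂ : S₂ → ℝ) :
    isBNE2 μ Ω p₁ p₂ ↔
      ((∀ s₁ : S₁, 0 < ∑ s₂ : S₂, ∑ ω ∈ Ω, μ s₁ s₂ ω → p₁ s₁ = 0) ∧
       (∀ s₂ : S₂, 0 < ∑ s₁ : S₁, ∑ ω ∈ Ω, μ s₁ s₂ ω → p₂ s₂ = 0)) := by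
  have o2' : (∀ q₂ : S₂ → ℝ, expProfit2 μ Ω p₁ q₂ ≤ expProfit2 μ Ω p₁ p₂) ↔
      ∀ q₂ : S₂ → ℝ, expProfit1 (fun t s => μ s t) Ω q₂ p₁ ≤
        expProfit1 (fun t s => μ s t) Ω p₂ p₁ := by
    simp only [expProfit2_eq]
  constructor
  · rintro ⟨d1, d2⟩
    have o1 := opt_of_dev d1
    have o2 := opt_of_dev (o2'.1 d2)
    have key : ∀ s t, ∀ ω ∈ Ω, 0 < μ s t ω → p₁ s ≤ 0 ∧ p₂ t ≤ 0 := by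
      intro s t ω hω hp
      let A : Finset (S₁ × S₂ × ℝ) :=
        (Finset.univ ×ˢ Finset.univ ×ˢ Ω).filter fun x => 0 < μ x.1 x.2.1 x.2.2
      have memA : ∀ s t ω, (s, t, ω) ∈ A ↔ ω ∈ Ω ∧ 0 < μ s t ω := by
        intro s t ω; simp [A]
      obtain ⟨⟨s', t', ω'⟩, hm, hmax⟩ := A.exists_max_image
        (fun x => max (p₁ x.1) (p₂ x.2.1)) ⟨(s, t, ω), (memA _ _ _).2 ⟨hω, hp⟩⟩
      have hmax' : ∀ s t, ∀ ω ∈ Ω, 0 < μ s t ω →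
          max (p₁ s) (p₂ t) ≤ max (p₁ s') (p₂ t') := fun s t ω h1 h2 =>
        hmax (s, t, ω) ((memA _ _ _).2 ⟨h1, h2⟩)
      obtain ⟨hω', hp'⟩ := (memA _ _ _).1 hm
      have hle : max (p₁ s') (p₂ t') ≤ 0 := by
        by_contra! hc
        rcases le_total (p₂ t') (p₁ s') with h | h
        · rw [max_eq_left h] at hc hmax'
          exact no_max hΩpos hμ0 o1 o2 hω' hp' hc
            fun t ω h1 h2 => (le_max_right _ _).trans (hmax' s' t ω h1 h2)
        · rw [max_eq_right h] at hc hmax'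
          exact no_max (μ := fun t s => μ s t) hΩpos (fun t s => hμ0 s t) o2 o1 hω' hp' hc
            fun s ω h1 h2 => (le_max_left _ _).trans (hmax' s t' ω h1 h2)
      exact max_le_iff.1 ((hmax' s t ω hω hp).trans hle)
    have key2 : ∀ s t, ∀ ω ∈ Ω, 0 < μ s t ω → p₁ s = 0 ∧ p₂ t = 0 := by
      intro s t ω hω hp
      obtain ⟨h1, h2⟩ := key s t ω hω hp
      have n1 := opt_not_neg hΩpos (hμ0 s) (o1 s) hω hp
      have n2 := opt_not_neg hΩpos (fun s ω => hμ0 s t ω) (o2 t) hω hp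
      constructor
      · by_contra hne
        have a := n1 (lt_of_le_of_ne h1 hne)
        have b := n2 (by linarith)
        linarith
      · by_contra hne
        have a := n2 (lt_of_le_of_ne h2 hne)
        have b := n1 (by linarith)
        linarith
    constructor
    · intro s hs
      obtain ⟨t, ω, hω, hp⟩ := exists_atom hs
      exact (key2 s t ω hω hp).1
    · intro t ht
      obtain ⟨s, ω, hω, hp⟩ := exists_atom ht
      exact (key2 s t ω hω hp).2
  · rintro ⟨z1, z2⟩
    have y1 : ∀ s t, ∀ ω ∈ Ω, 0 < μ s t ω → p₁ s = 0 := fun s t ω hω hp =>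
      z1 s (dsum_pos (fun t ω _ => hμ0 s t ω) hω hp)
    have y2 : ∀ s t, ∀ ω ∈ Ω, 0 < μ s t ω → p₂ t = 0 := fun s t ω hω hp =>
      z2 t (dsum_pos (fun s ω _ => hμ0 s t ω) hω hp)
    exact ⟨dev_of_zero hμ0 y1 y2, o2'.2 (dev_of_zero (fun t s => hμ0 s t)
      (fun t s => y2 s t) (fun t s => y1 s t))⟩
end

section
/- In the Bertrand pricing game with incomplete information with exactly two firms, suppose the strategy profile p satisfies p_1(s_1) > 0 and p_2(s_2) = 0 for some signals s_1, s_2 whose joint probability under μ is strictly positive. Then firm 2 strictly increases its expected profit by changing its quote at s_2 from 0 to the strictly positive price min(p_1(s_1), min Ω)/2, leaving its other quotes unchanged; in particular, p is not a Bayesian Nash equilibrium. -/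
open Classical

/-- with exactly two firms, if `p₁ s₁ > 0` and `p₂ s₂ = 0` for signals whose
joint probability is strictly positive, then firm 2 strictly gains by moving its quote at
`s₂` from `0` to `min (p₁ s₁) (min Ω) / 2`; in particular `p` is not a BNE. -/
theorem two_firm_profitable_deviation_from_zero
    {S₁ S₂ : Type*} [Fintype S₁] [Fintype S₂] [DecidableEq S₂]
    (Ω : Finset ℝ) (hΩne : Ω.Nonempty) (hΩpos : ∀ ω ∈ Ω, 0 < ω)
    (μ : S₁ → S₂ → ℝ → ℝ)
    (hμ0 : ∀ s₁ s₂ ω, 0 ≤ μ s₁ s₂ ω)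
    (hμ1 : ∑ s₁ : S₁, ∑ s₂ : S₂, ∑ ω ∈ Ω, μ s₁ s₂ ω = 1)
    (p₁ : S₁ → ℝ) (p₂ : S₂ → ℝ) (s₁ : S₁) (s₂ : S₂)
    (h₁ : 0 < p₁ s₁) (h₂ : p₂ s₂ = 0)
    (hjoint : 0 < ∑ ω ∈ Ω, μ s₁ s₂ ω) :
    (0 < min (p₁ s₁) (Ω.min' hΩne) / 2 ∧
      expProfit2 μ Ω p₁ p₂ <
        expProfit2 μ Ω p₁ (Function.update p₂ s₂ (min (p₁ s₁) (Ω.min' hΩne) / 2))) ∧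
    ¬ isBNE2 μ Ω p₁ p₂ := by
  have hm : 0 < Ω.min' hΩne := hΩpos _ (Ω.min'_mem hΩne)
  have ht : 0 < min (p₁ s₁) (Ω.min' hΩne) / 2 := half_pos (lt_min h₁ hm)
  have htp : min (p₁ s₁) (Ω.min' hΩne) / 2 < p₁ s₁ :=
    lt_of_lt_of_le (half_lt_self (lt_min h₁ hm)) (min_le_left _ _)
  have htω : ∀ ω ∈ Ω, min (p₁ s₁) (Ω.min' hΩne) / 2 ≤ ω := fun ω hω =>
    (half_lt_self (lt_min h₁ hm)).le.trans ((min_le_right _ _).trans (Ω.min'_le ω hω))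
  generalize min (p₁ s₁) (Ω.min' hΩne) / 2 = t at ht htp htω ⊢
  have hz : ∀ b ω : ℝ, pay 0 b ω = 0 := by
    intro b ω
    unfold pay
    split_ifs <;> simp
  have hnn : ∀ b ω : ℝ, 0 ≤ pay t b ω := by
    intro b ω
    unfold pay
    split_ifs <;> linarith
  -- weak improvement, termwise
  have hle : ∀ a b, ∀ ω ∈ Ω, μ a b ω * pay (p₂ b) (p₁ a) ω ≤
      μ a b ω * pay (Function.update p₂ s₂ t b) (p₁ a) ω := by
    intro a b ω _
    apply mul_le_mul_of_nonneg_left _ (hμ0 a b ω)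
    by_cases hb : b = s₂
    · subst hb
      rw [Function.update_self, h₂, hz]
      exact hnn _ _
    · rw [Function.update_of_ne hb]
  -- strict improvement at the given signal pair
  have hlt : ∑ ω ∈ Ω, μ s₁ s₂ ω * pay (p₂ s₂) (p₁ s₁) ω <
      ∑ ω ∈ Ω, μ s₁ s₂ ω * pay (Function.update p₂ s₂ t s₂) (p₁ s₁) ω := by
    have e1 : ∑ ω ∈ Ω, μ s₁ s₂ ω * pay (p₂ s₂) (p₁ s₁) ω = 0 := by
      apply Finset.sum_eq_zero
      intro ω _
      rw [h₂, hz, mul_zero]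
    have e2 : ∑ ω ∈ Ω, μ s₁ s₂ ω * pay (Function.update p₂ s₂ t s₂) (p₁ s₁) ω
        = (∑ ω ∈ Ω, μ s₁ s₂ ω) * t := by
      rw [Finset.sum_mul]
      apply Finset.sum_congr rfl
      intro ω hω
      rw [Function.update_self, pay, if_pos ⟨htp, htω ω hω⟩]
    rw [e1, e2]
    exact mul_pos hjoint ht
  have main : expProfit2 μ Ω p₁ p₂ < expProfit2 μ Ω p₁ (Function.update p₂ s₂ t) := by
    unfold expProfit2
    apply Finset.sum_lt_sum
    · intro a _
      exact Finset.sum_le_sum fun b _ => Finset.sum_le_sum (hle a b)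
    · refine ⟨s₁, Finset.mem_univ _, Finset.sum_lt_sum ?_ ⟨s₂, Finset.mem_univ _, hlt⟩⟩
      exact fun b _ => Finset.sum_le_sum (hle s₁ b)
  exact ⟨⟨ht, main⟩, fun h => absurd (h.2 _) (not_le.mpr main)⟩
end
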